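/- Let n ≥ 1 and let z and t be nonempty subsets of Fin n. Then the sum over all nonempty subsets s of Fin n containing zᶜ (the complement of z in Fin n) of (−1)^{|s| − |zᶜ|} · [s ∩ t ≠ ∅] equals −1 if t = z and 0 otherwise, where [·] denotes the 0/1 indicator. -/

import Mathlib

/-!
Write `s = zᶜ ∪ u` with `u ⊆ z`; the excluded set `s = ∅` would contribute `0` anyway. Such an `s`
misses `t` exactly when `t ⊆ z` and `u ⊆ z \ t`, so the sum equals
`Σ_{u ⊆ z} (-1)^|u| - [t ⊆ z] Σ_{u ⊆ z \ t} (-1)^|u|`.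
An alternating sum over a powerset vanishes unless the ground set is empty. Hence the first sum is
`0`, and the second term is `1` exactly when `t ⊆ z` and `z ⊆ t`.
-/

lemma sum_powerset_neg_one_pow_card_real {n : ℕ} (x : Finset (Fin n)) :
    ∑ u ∈ x.powerset, (-1 : ℝ) ^ u.card = if x = ∅ then 1 else 0 := by
  have h := congrArg (Int.cast : ℤ → ℝ) (Finset.sum_powerset_neg_one_pow_card (x := x))
  push_cast at h
  exact h

/-- Reindexing by `s = zᶜ ∪ u`. -/
lemma sum_supersets_compl_eq {n : ℕ} (z t : Finset (Fin n)) :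
    (∑ s ∈ Finset.univ.filter (fun s : Finset (Fin n) => s.Nonempty ∧ zᶜ ⊆ s),
        (-1 : ℝ) ^ (s.card - zᶜ.card) * (if (s ∩ t).Nonempty then 1 else 0)) =
      ∑ u ∈ z.powerset,
        (-1 : ℝ) ^ u.card * (if ((zᶜ ∪ u) ∩ t).Nonempty then 1 else 0) := by
  -- The condition `s.Nonempty` can be dropped, since the term at `s = ∅` is zero.
  have hdrop : (∑ s ∈ Finset.univ.filter (fun s : Finset (Fin n) => s.Nonempty ∧ zᶜ ⊆ s),
        (-1 : ℝ) ^ (s.card - zᶜ.card) * (if (s ∩ t).Nonempty then 1 else 0)) =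
      ∑ s ∈ Finset.univ.filter (fun s : Finset (Fin n) => zᶜ ⊆ s),
        (-1 : ℝ) ^ (s.card - zᶜ.card) * (if (s ∩ t).Nonempty then 1 else 0) := by
    apply Finset.sum_subset
    · intro s hs
      simp only [Finset.mem_filter] at hs ⊢
      exact ⟨hs.1, hs.2.2⟩
    · intro s hs hs'
      have : s = ∅ := by
        by_contra hne
        simp only [Finset.mem_filter] at hs hs'
        exact hs' ⟨hs.1, Finset.nonempty_iff_ne_empty.mpr hne, hs.2⟩
      simp [this]
  rw [hdrop]
  symm
  refine Finset.sum_bij' (fun u _ => zᶜ ∪ u) (fun s _ => s ∩ z) ?_ ?_ ?_ ?_ ?_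
  · intro u _
    simp
  · intro s _
    simp
  · intro u hu
    rw [Finset.mem_powerset] at hu
    ext i
    have := @hu i
    simp
    tauto
  · intro s hs
    have hs := (Finset.mem_filter.mp hs).2
    ext i
    have := @hs i
    simp at this ⊢
    tauto
  · intro u hu
    rw [Finset.mem_powerset] at hu
    have hd : Disjoint zᶜ u := (disjoint_compl_left (a := z)).mono_right hu
    rw [Finset.card_union_of_disjoint hd, Nat.add_sub_cancel_left]

/-- Inclusion–exclusion identity expressing a canonical cut vector in terms of the
subsystem depolarizing gauges: for nonempty subsets `z, t` of `Fin n`,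
`Σ_{s ⊇ zᶜ, s ≠ ∅} (−1)^{|s|−|zᶜ|} · [s ∩ t ≠ ∅] = −1` if `t = z` and `0` otherwise. -/
theorem sdg_inversion (n : ℕ) (hn : 1 ≤ n) (z t : Finset (Fin n))
    (hz : z.Nonempty) (ht : t.Nonempty) :
    (∑ s ∈ Finset.univ.filter (fun s : Finset (Fin n) => s.Nonempty ∧ zᶜ ⊆ s),
        (-1 : ℝ) ^ (s.card - zᶜ.card) * (if (s ∩ t).Nonempty then 1 else 0)) =
      if t = z then -1 else 0 := by
  rw [sum_supersets_compl_eq]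
  have hz0 : ∑ u ∈ z.powerset, (-1 : ℝ) ^ u.card = 0 := by
    rw [sum_powerset_neg_one_pow_card_real, if_neg hz.ne_empty]
  by_cases htz : t ⊆ z
  · have hterm : ∀ u ∈ z.powerset,
        (-1 : ℝ) ^ u.card * (if ((zᶜ ∪ u) ∩ t).Nonempty then 1 else 0) =
          (-1 : ℝ) ^ u.card - if u ⊆ z \ t then (-1 : ℝ) ^ u.card else 0 := by
      intro u hu
      rw [Finset.mem_powerset] at hu
      have hiff : ((zᶜ ∪ u) ∩ t).Nonempty ↔ ¬ u ⊆ z \ t := by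
        rw [Finset.not_subset]
        constructor
        · rintro ⟨i, hi⟩
          have := @htz i
          refine ⟨i, ?_, ?_⟩ <;> simp at hi ⊢ <;> tauto
        · rintro ⟨i, hi, hi'⟩
          have := @hu i
          refine ⟨i, ?_⟩
          simp at hi' ⊢
          tauto
      by_cases h : u ⊆ z \ t <;> simp [hiff, h]
    have hfilter : z.powerset.filter (fun u => u ⊆ z \ t) = (z \ t).powerset := by
      ext u
      simp only [Finset.mem_filter, Finset.mem_powerset]
      exact ⟨fun h => h.2, fun h => ⟨h.trans Finset.sdiff_subset, h⟩⟩
    rw [Finset.sum_congr rfl hterm, Finset.sum_sub_distrib, hz0, ← Finset.sum_filter, hfilter,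
      sum_powerset_neg_one_pow_card_real]
    have hiff : z \ t = ∅ ↔ t = z := by
      rw [Finset.sdiff_eq_empty_iff_subset]
      exact ⟨fun h => htz.antisymm h, fun h => h.ge⟩
    by_cases h : t = z <;> simp [hiff, h]
  · -- Some point of `t` lies in `zᶜ`, so every indicator equals one.
    rw [if_neg (fun h => htz h.le), ← hz0]
    obtain ⟨i, hit, hiz⟩ := Finset.not_subset.mp htz
    refine Finset.sum_congr rfl fun u _ => ?_
    rw [if_pos ⟨i, by simp [hit, hiz]⟩, mul_one]
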